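/- For all formulas φ, ψ ∈ ML(⊻)(Φ) the upper dimension satisfies: Dim(p) = Dim(¬p) = 1 for p ∈ Φ; Dim(φ∧ψ) ≤ Dim(φ)·Dim(ψ); Dim(φ∨ψ) ≤ Dim(φ)·Dim(ψ); Dim(φ⊻ψ) ≤ Dim(φ) + Dim(ψ); Dim(◇φ) ≤ Dim(φ); and Dim(□φ) ≤ Dim(φ). -/

import Mathlib

namespace MDLTeam

/-- A Kripke model over a set `Φ` of proposition symbols: a set `W` of worlds,
an accessibility relation `R` and a valuation `V`.  A team of `K` is a subset of `K.W`. -/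
structure Kripke (Φ : Type) : Type 1 where
  W : Type
  R : W → W → Prop
  V : Φ → Set W

namespace Kripke

variable {Φ : Type}

/-- `R[T] = {v | ∃ w ∈ T, w R v}` -/
def img (K : Kripke Φ) (T : Set K.W) : Set K.W := {v | ∃ w ∈ T, K.R w v}

/-- `R⁻¹[S] = {w | ∃ v ∈ S, w R v}` -/
def pre (K : Kripke Φ) (S : Set K.W) : Set K.W := {w | ∃ v ∈ S, K.R w v}

/-- `T[R]S` iff `S ⊆ R[T]` and `T ⊆ R⁻¹[S]`. -/
def trs (K : Kripke Φ) (T S : Set K.W) : Prop := S ⊆ K.img T ∧ T ⊆ K.pre S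

end Kripke

/-- Formulas of modal logic `ML(Φ)` in negation normal form. -/
inductive MLFrm (Φ : Type) : Type
  | atom (p : Φ)
  | natom (p : Φ)
  | and (φ ψ : MLFrm Φ)
  | or (φ ψ : MLFrm Φ)
  | dia (φ : MLFrm Φ)
  | box (φ : MLFrm Φ)
  deriving DecidableEq

namespace MLFrm

variable {Φ : Type}

/-- Team semantics for `ML`. -/
def sat (K : Kripke Φ) : MLFrm Φ → Set K.W → Prop
  | atom p, T => T ⊆ K.V p
  | natom p, T => T ∩ K.V p = ∅
  | and φ ψ, T => sat K φ T ∧ sat K ψ T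
  | or φ ψ, T => ∃ T₁ T₂, T = T₁ ∪ T₂ ∧ sat K φ T₁ ∧ sat K ψ T₂
  | dia φ, T => ∃ S, K.trs T S ∧ sat K φ S
  | box φ, T => sat K φ (K.img T)

/-- Standard (pointwise) Kripke semantics for `ML`. -/
def psat (K : Kripke Φ) : MLFrm Φ → K.W → Prop
  | atom p, w => w ∈ K.V p
  | natom p, w => w ∉ K.V p
  | and φ ψ, w => psat K φ w ∧ psat K ψ w
  | or φ ψ, w => psat K φ w ∨ psat K ψ w
  | dia φ, w => ∃ v, K.R w v ∧ psat K φ v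
  | box φ, w => ∀ v, K.R w v → psat K φ v

/-- Modal depth. -/
def md : MLFrm Φ → ℕ
  | atom _ => 0
  | natom _ => 0
  | and φ ψ => max (md φ) (md ψ)
  | or φ ψ => max (md φ) (md ψ)
  | dia φ => md φ + 1
  | box φ => md φ + 1

end MLFrm

/-- Formulas of `ML(⊻)(Φ)`: modal logic with intuitionistic disjunction. -/
inductive MLI (Φ : Type) : Type
  | atom (p : Φ)
  | natom (p : Φ)
  | and (φ ψ : MLI Φ)
  | or (φ ψ : MLI Φ)
  | dia (φ : MLI Φ)
  | box (φ : MLI Φ)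
  | idis (φ ψ : MLI Φ)
  deriving DecidableEq

namespace MLI

variable {Φ : Type}

/-- Team semantics for `ML(⊻)`. -/
def sat (K : Kripke Φ) : MLI Φ → Set K.W → Prop
  | atom p, T => T ⊆ K.V p
  | natom p, T => T ∩ K.V p = ∅
  | and φ ψ, T => sat K φ T ∧ sat K ψ T
  | or φ ψ, T => ∃ T₁ T₂, T = T₁ ∪ T₂ ∧ sat K φ T₁ ∧ sat K ψ T₂
  | dia φ, T => ∃ S, K.trs T S ∧ sat K φ S
  | box φ, T => sat K φ (K.img T)
  | idis φ ψ, T => sat K φ T ∨ sat K ψ T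

/-- Modal depth. -/
def md : MLI Φ → ℕ
  | atom _ => 0
  | natom _ => 0
  | and φ ψ => max (md φ) (md ψ)
  | or φ ψ => max (md φ) (md ψ)
  | dia φ => md φ + 1
  | box φ => md φ + 1
  | idis φ ψ => max (md φ) (md ψ)

/-- The number of occurrences of the connective `⊻` in a formula. -/
def occIdis : MLI Φ → ℕ
  | atom _ => 0
  | natom _ => 0
  | and φ ψ => occIdis φ + occIdis ψ
  | or φ ψ => occIdis φ + occIdis ψ
  | dia φ => occIdis φ
  | box φ => occIdis φ
  | idis φ ψ => occIdis φ + occIdis ψ + 1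

/-- The number of symbols in a formula. -/
def size : MLI Φ → ℕ
  | atom _ => 1
  | natom _ => 2
  | and φ ψ => size φ + size ψ + 1
  | or φ ψ => size φ + size ψ + 1
  | dia φ => size φ + 1
  | box φ => size φ + 1
  | idis φ ψ => size φ + size ψ + 1

end MLI

/-- Formulas of extended modal dependence logic `EMDL(Φ)`: `ML` extended by
dependence atoms `dep(ψ₁,…,ψₙ,θ)` with `ψ₁,…,ψₙ,θ ∈ ML(Φ)`. -/
inductive EMDL (Φ : Type) : Type
  | atom (p : Φ)
  | natom (p : Φ)
  | and (φ ψ : EMDL Φ)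
  | or (φ ψ : EMDL Φ)
  | dia (φ : EMDL Φ)
  | box (φ : EMDL Φ)
  | dep (l : List (MLFrm Φ)) (θ : MLFrm Φ)

namespace EMDL

variable {Φ : Type}

/-- Team semantics for `EMDL`. -/
def sat (K : Kripke Φ) : EMDL Φ → Set K.W → Prop
  | atom p, T => T ⊆ K.V p
  | natom p, T => T ∩ K.V p = ∅
  | and φ ψ, T => sat K φ T ∧ sat K ψ T
  | or φ ψ, T => ∃ T₁ T₂, T = T₁ ∪ T₂ ∧ sat K φ T₁ ∧ sat K ψ T₂
  | dia φ, T => ∃ S, K.trs T S ∧ sat K φ S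
  | box φ, T => sat K φ (K.img T)
  | dep l θ, T => ∀ w ∈ T, ∀ v ∈ T,
      (∀ ψ ∈ l, (MLFrm.sat K ψ {w} ↔ MLFrm.sat K ψ {v})) →
      (MLFrm.sat K θ {w} ↔ MLFrm.sat K θ {v})

end EMDL

/-- `k`-bisimilarity of pointed models. -/
def bisim {Φ : Type} (K K' : Kripke Φ) : ℕ → K.W → K'.W → Prop
  | 0, w, w' => ∀ p, w ∈ K.V p ↔ w' ∈ K'.V p
  | k + 1, w, w' =>
      (∀ p, w ∈ K.V p ↔ w' ∈ K'.V p) ∧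
      (∀ v, K.R w v → ∃ v', K'.R w' v' ∧ bisim K K' k v v') ∧
      (∀ v', K'.R w' v' → ∃ v, K.R w v ∧ bisim K K' k v v')

/-- Team `k`-bisimilarity: `K,T ⇌ₖ K',T'`. -/
def tbisim {Φ : Type} (K K' : Kripke Φ) (k : ℕ) (T : Set K.W) (T' : Set K'.W) : Prop :=
  (∀ w ∈ T, ∃ w' ∈ T', bisim K K' k w w') ∧
  (∀ w' ∈ T', ∃ w ∈ T, bisim K K' k w w')

/-- `M(φ,K)`: the set of maximal teams satisfying `φ` in `K` (for `ML(⊻)`). -/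
def MLI.Mset {Φ : Type} (K : Kripke Φ) (φ : MLI Φ) : Set (Set K.W) :=
  {T | MLI.sat K φ T ∧ ∀ S, MLI.sat K φ S → T ⊆ S → S = T}

/-- `N(φ,K)`: the family of minimal teams not satisfying `φ` in `K` (for `ML(⊻)`). -/
def MLI.Nset {Φ : Type} (K : Kripke Φ) (φ : MLI Φ) : Set (Set K.W) :=
  {T | ¬ MLI.sat K φ T ∧ ∀ S, ¬ MLI.sat K φ S → S ⊆ T → S = T}

/-- The upper dimension `Dim(φ)` of an `ML(⊻)`-formula: the least `m` such that
`|M(φ,K)| ≤ m` for every Kripke model `K` over `Φ`. -/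
noncomputable def MLI.Dim {Φ : Type} (φ : MLI Φ) : ℕ :=
  sInf {m : ℕ | ∀ K : Kripke Φ, (MLI.Mset K φ).Finite ∧ (MLI.Mset K φ).ncard ≤ m}

/-- The lower dimension `dim(φ)` of an `ML(⊻)`-formula: the least `n` such that
`|T| ≤ n` for every Kripke model `K` over `Φ` and every `T ∈ N(φ,K)`. -/
noncomputable def MLI.ldim {Φ : Type} (φ : MLI Φ) : ℕ :=
  sInf {n : ℕ | ∀ K : Kripke Φ, ∀ T ∈ MLI.Nset K φ, T.Finite ∧ T.ncard ≤ n}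

/-- `M(φ,K)`: the set of maximal teams satisfying `φ` in `K` (for `EMDL`). -/
def EMDL.Mset {Φ : Type} (K : Kripke Φ) (φ : EMDL Φ) : Set (Set K.W) :=
  {T | EMDL.sat K φ T ∧ ∀ S, EMDL.sat K φ S → T ⊆ S → S = T}

/-- The upper dimension `Dim(φ)` of an `EMDL`-formula. -/
noncomputable def EMDL.Dim {Φ : Type} (φ : EMDL Φ) : ℕ :=
  sInf {m : ℕ | ∀ K : Kripke Φ, (EMDL.Mset K φ).Finite ∧ (EMDL.Mset K φ).ncard ≤ m}

/-- The `Ψ`-type of a state: `type_Ψ(K,w) = {ψ ∈ Ψ | K,w ⊨ ψ}`. -/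
def typeSet {Φ : Type} (K : Kripke Φ) (Ψ : Set (MLFrm Φ)) (w : K.W) : Set (MLFrm Φ) :=
  {ψ | ψ ∈ Ψ ∧ MLFrm.psat K ψ w}

/-- `tset_Ψ(K,T) = {type_Ψ(K,w) | w ∈ T}`. -/
def tset {Φ : Type} (K : Kripke Φ) (Ψ : Set (MLFrm Φ)) (T : Set K.W) : Set (Set (MLFrm Φ)) :=
  typeSet K Ψ '' T

/-!
Call a family of sets `m`-generated if it is the lower closure of at most `m` sets. The maximal
elements of such a family are among any generators, and finitely many generators can be thinned to
the maximal ones, so `Dim φ` is the least `m` for which all the families `‖φ‖^K` are `m`-generated.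
Each connective acts on these families by an operation which carries generators to generators:
`∧`, `∨`, `⊻` by pairwise intersections, pairwise unions and union of the generating sets, `◇` by
`R⁻¹[·]`, and `□` by the right adjoint of `R[·]`. By induction on `φ` some `m` always works, so the
infimum defining `Dim φ` is attained.
-/

section Order

open Set
open scoped SetFamily

variable {α β : Type*}

theorem lowerClosure_setOf_maximal_of_finite [Preorder α] {C : Set α} (hC : C.Finite) :
    lowerClosure {a | Maximal (· ∈ C) a} = lowerClosure C := by
  refine le_antisymm (lowerClosure_mono fun _ ha => ha.prop) (lowerClosure_le.2 fun a ha => ?_)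
  obtain ⟨b, hab, hb⟩ := hC.exists_le_maximal ha
  exact ⟨b, hb, hab⟩

theorem maximal_mem_lowerClosure_iff [PartialOrder α] {C : Set α} {a : α} :
    Maximal (· ∈ lowerClosure C) a ↔ Maximal (· ∈ C) a := by
  constructor
  · intro ha
    obtain ⟨c, hc, hac⟩ := ha.prop
    obtain rfl : a = c := ha.eq_of_le (subset_lowerClosure hc) hac
    exact ha.mono (fun _ h => subset_lowerClosure h) hc
  · refine fun ha => ⟨subset_lowerClosure ha.prop, ?_⟩
    rintro b ⟨c, hc, hbc⟩ hab
    exact hbc.trans (ha.le_of_ge hc (hab.trans hbc))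

theorem encard_image2_le {γ : Type*} (f : α → β → γ) (A : Set α) (B : Set β) :
    (image2 f A B).encard ≤ A.encard * B.encard := by
  rw [← image_prod, ← encard_prod]
  exact encard_image_le _ _

theorem lowerClosure_sups [DistribLattice α] (A B : Set α) :
    (lowerClosure (A ⊻ B) : Set α) = (lowerClosure A : Set α) ⊻ lowerClosure B := by
  ext x
  constructor
  · rintro ⟨_, ⟨a, ha, b, hb, rfl⟩, hx⟩
    refine ⟨x ⊓ a, ⟨a, ha, inf_le_right⟩, x ⊓ b, ⟨b, hb, inf_le_right⟩, ?_⟩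
    exact (inf_sup_left x a b).symm.trans (inf_eq_left.2 hx)
  · rintro ⟨_, ⟨a, ha, hxa⟩, _, ⟨b, hb, hyb⟩, rfl⟩
    exact ⟨a ⊔ b, sup_mem_sups ha hb, sup_le_sup hxa hyb⟩

theorem lowerClosure_image_lowerClosure [Preorder α] [Preorder β] {f : α → β} (hf : Monotone f)
    (C : Set α) : lowerClosure (f '' lowerClosure C) = lowerClosure (f '' C) := by
  refine le_antisymm (lowerClosure_le.2 ?_) (lowerClosure_mono (image_mono subset_lowerClosure))
  rintro _ ⟨a, ⟨c, hc, hac⟩, rfl⟩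
  exact ⟨f c, mem_image_of_mem f hc, hf hac⟩

theorem preimage_lowerClosure_of_galoisConnection [Preorder α] [Preorder β] {l : α → β}
    {u : β → α} (gc : GaloisConnection l u) (C : Set β) :
    l ⁻¹' lowerClosure C = lowerClosure (u '' C) := by
  ext a
  simp only [mem_preimage, SetLike.mem_coe, mem_lowerClosure, exists_mem_image, gc a _]

/-- A subset of an ordered type (such as a family of teams) is `m`-generated if it is the lower
closure of at most `m` elements; this is the invariant that the connectives are tracked by.
The cardinality is an `encard`, so the generating set is finite. -/
def LowerGenerated [Preorder α] (m : ℕ) (F : Set α) : Prop :=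
  ∃ C : Set α, C.encard ≤ m ∧ (lowerClosure C : Set α) = F

variable {m n : ℕ}

theorem lowerGenerated_Iic [Preorder α] (a : α) : LowerGenerated 1 (Iic a) :=
  ⟨{a}, by simp, by simp⟩

namespace LowerGenerated

theorem isLowerSet [Preorder α] {F : Set α} (hF : LowerGenerated m F) : IsLowerSet F := by
  obtain ⟨C, -, rfl⟩ := hF
  exact (lowerClosure C).lower

theorem pos [Preorder α] {F : Set α} (hF : LowerGenerated m F) (hne : F.Nonempty) : 0 < m := by
  obtain ⟨C, hC, rfl⟩ := hF
  obtain ⟨_, c, hc, -⟩ := hne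
  exact_mod_cast (encard_pos.2 ⟨c, hc⟩).trans_le hC

theorem encard_setOf_maximal_le [PartialOrder α] {F : Set α} (hF : LowerGenerated m F) :
    {a | Maximal (· ∈ F) a}.encard ≤ m := by
  obtain ⟨C, hC, rfl⟩ := hF
  exact (encard_le_encard fun _ ha => (maximal_mem_lowerClosure_iff.1 ha).prop).trans hC

theorem of_encard_setOf_maximal_le [PartialOrder α] {F : Set α} (hF : LowerGenerated m F)
    (hn : {a | Maximal (· ∈ F) a}.encard ≤ n) : LowerGenerated n F := by
  obtain ⟨C, hC, rfl⟩ := hF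
  refine ⟨_, hn, ?_⟩
  simp only [SetLike.mem_coe, maximal_mem_lowerClosure_iff,
    lowerClosure_setOf_maximal_of_finite (finite_of_encard_le_coe hC)]

theorem union [Preorder α] {F G : Set α} (hF : LowerGenerated m F) (hG : LowerGenerated n G) :
    LowerGenerated (m + n) (F ∪ G) := by
  obtain ⟨A, hA, rfl⟩ := hF
  obtain ⟨B, hB, rfl⟩ := hG
  refine ⟨A ∪ B, ?_, by simp⟩
  push_cast
  exact (encard_union_le A B).trans (add_le_add hA hB)

theorem inter [SemilatticeInf α] {F G : Set α} (hF : LowerGenerated m F)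
    (hG : LowerGenerated n G) : LowerGenerated (m * n) (F ∩ G) := by
  obtain ⟨A, hA, rfl⟩ := hF
  obtain ⟨B, hB, rfl⟩ := hG
  refine ⟨A ⊼ B, ?_, by rw [lowerClosure_infs, LowerSet.coe_inf]⟩
  push_cast
  exact (encard_image2_le _ A B).trans (mul_le_mul' hA hB)

theorem sups [DistribLattice α] {F G : Set α} (hF : LowerGenerated m F)
    (hG : LowerGenerated n G) : LowerGenerated (m * n) (F ⊻ G) := by
  obtain ⟨A, hA, rfl⟩ := hF
  obtain ⟨B, hB, rfl⟩ := hG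
  refine ⟨A ⊻ B, ?_, lowerClosure_sups A B⟩
  push_cast
  exact (encard_image2_le _ A B).trans (mul_le_mul' hA hB)

theorem lowerClosure_image [Preorder α] [Preorder β] {f : α → β} (hf : Monotone f) {F : Set α}
    (hF : LowerGenerated m F) : LowerGenerated m (lowerClosure (f '' F) : Set β) := by
  obtain ⟨C, hC, rfl⟩ := hF
  exact ⟨f '' C, (encard_image_le f C).trans hC, by rw [lowerClosure_image_lowerClosure hf]⟩

theorem preimage [Preorder α] [Preorder β] {l : α → β} {u : β → α} (gc : GaloisConnection l u)
    {F : Set β} (hF : LowerGenerated m F) : LowerGenerated m (l ⁻¹' F) := by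
  obtain ⟨C, hC, rfl⟩ := hF
  exact ⟨u '' C, (encard_image_le u C).trans hC,
    (preimage_lowerClosure_of_galoisConnection gc C).symm⟩

end LowerGenerated

end Order

namespace Kripke

variable {Φ : Type} (K : Kripke Φ)

theorem monotone_pre : Monotone K.pre := fun _ _ h _ ⟨v, hv, hr⟩ => ⟨v, h hv, hr⟩

theorem gc_img : GaloisConnection K.img fun S => (K.pre Sᶜ)ᶜ := by
  refine fun T S => ⟨fun h w hw ⟨v, hv, hr⟩ => hv (h ⟨w, hw, hr⟩), fun h v ⟨w, hw, hr⟩ => ?_⟩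
  by_contra hv
  exact h hw ⟨v, hv, hr⟩

theorem trs_img_inter {T S : Set K.W} (h : T ⊆ K.pre S) : K.trs T (K.img T ∩ S) := by
  refine ⟨Set.inter_subset_left, fun w hw => ?_⟩
  obtain ⟨v, hv, hr⟩ := h hw
  exact ⟨v, ⟨⟨w, hw, hr⟩, hv⟩, hr⟩

end Kripke

namespace MLI

open Set
open scoped SetFamily

variable {Φ : Type} {m n : ℕ}

/-- `‖φ‖^K`: the family of teams of `K` satisfying `φ`. -/
def teams (K : Kripke Φ) (φ : MLI Φ) : Set (Set K.W) := {T | sat K φ T}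

section Semantics

variable (K : Kripke Φ)

theorem teams_atom (p : Φ) : teams K (atom p) = Iic (K.V p) := rfl

theorem teams_natom (p : Φ) : teams K (natom p) = Iic (K.V p)ᶜ :=
  Set.ext fun _ => disjoint_iff_inter_eq_empty.symm.trans subset_compl_iff_disjoint_right.symm

theorem teams_and (φ ψ : MLI Φ) : teams K (and φ ψ) = teams K φ ∩ teams K ψ := rfl

theorem teams_or (φ ψ : MLI Φ) : teams K (or φ ψ) = teams K φ ⊻ teams K ψ := by
  ext T
  constructor
  · rintro ⟨T₁, T₂, rfl, h₁, h₂⟩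
    exact ⟨T₁, h₁, T₂, h₂, rfl⟩
  · rintro ⟨T₁, h₁, T₂, h₂, rfl⟩
    exact ⟨T₁, T₂, rfl, h₁, h₂⟩

theorem teams_idis (φ ψ : MLI Φ) : teams K (idis φ ψ) = teams K φ ∪ teams K ψ := rfl

theorem teams_dia {φ : MLI Φ} (hφ : IsLowerSet (teams K φ)) :
    teams K (dia φ) = lowerClosure (K.pre '' teams K φ) := by
  ext T
  constructor
  · rintro ⟨S, hTS, hS⟩
    exact ⟨K.pre S, mem_image_of_mem K.pre hS, hTS.2⟩
  · rintro ⟨_, ⟨S, hS, rfl⟩, hTS⟩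
    exact ⟨K.img T ∩ S, K.trs_img_inter hTS, hφ inter_subset_right hS⟩

theorem teams_box (φ : MLI Φ) : teams K (box φ) = K.img ⁻¹' teams K φ := rfl

theorem sat_empty (φ : MLI Φ) : sat K φ ∅ := by
  induction φ with
  | atom p => exact empty_subset _
  | natom p => exact empty_inter _
  | and φ ψ hφ hψ => exact ⟨hφ, hψ⟩
  | or φ ψ hφ hψ => exact ⟨∅, ∅, (union_self ∅).symm, hφ, hψ⟩
  | dia φ hφ => exact ⟨∅, ⟨empty_subset _, empty_subset _⟩, hφ⟩
  | box φ hφ => rwa [sat, show K.img ∅ = ∅ from K.gc_img.l_bot]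
  | idis φ ψ hφ _ => exact Or.inl hφ

theorem mset_eq_setOf_maximal (φ : MLI Φ) : Mset K φ = {T | Maximal (· ∈ teams K φ) T} :=
  Set.ext fun _ => Iff.symm <| maximal_iff.trans <|
    and_congr_right fun _ => forall₃_congr fun _ _ _ => eq_comm

end Semantics

section Generated

variable {K : Kripke Φ} {φ ψ : MLI Φ}

theorem lowerGenerated_teams_atom (p : Φ) : LowerGenerated 1 (teams K (atom p)) :=
  teams_atom K p ▸ lowerGenerated_Iic _

theorem lowerGenerated_teams_natom (p : Φ) : LowerGenerated 1 (teams K (natom p)) :=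
  teams_natom K p ▸ lowerGenerated_Iic _

theorem lowerGenerated_teams_and (hφ : LowerGenerated m (teams K φ))
    (hψ : LowerGenerated n (teams K ψ)) : LowerGenerated (m * n) (teams K (and φ ψ)) :=
  teams_and K φ ψ ▸ hφ.inter hψ

theorem lowerGenerated_teams_or (hφ : LowerGenerated m (teams K φ))
    (hψ : LowerGenerated n (teams K ψ)) : LowerGenerated (m * n) (teams K (or φ ψ)) :=
  teams_or K φ ψ ▸ hφ.sups hψ

theorem lowerGenerated_teams_idis (hφ : LowerGenerated m (teams K φ))
    (hψ : LowerGenerated n (teams K ψ)) : LowerGenerated (m + n) (teams K (idis φ ψ)) :=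
  teams_idis K φ ψ ▸ hφ.union hψ

theorem lowerGenerated_teams_dia (hφ : LowerGenerated m (teams K φ)) :
    LowerGenerated m (teams K (dia φ)) :=
  teams_dia K hφ.isLowerSet ▸ hφ.lowerClosure_image K.monotone_pre

theorem lowerGenerated_teams_box (hφ : LowerGenerated m (teams K φ)) :
    LowerGenerated m (teams K (box φ)) :=
  teams_box K φ ▸ hφ.preimage K.gc_img

end Generated

theorem exists_forall_lowerGenerated_teams (φ : MLI Φ) :
    ∃ m, ∀ K : Kripke Φ, LowerGenerated m (teams K φ) := by
  induction φ with
  | atom p => exact ⟨1, fun _ => lowerGenerated_teams_atom p⟩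
  | natom p => exact ⟨1, fun _ => lowerGenerated_teams_natom p⟩
  | and φ ψ hφ hψ =>
    obtain ⟨m, hm⟩ := hφ
    obtain ⟨n, hn⟩ := hψ
    exact ⟨m * n, fun K => lowerGenerated_teams_and (hm K) (hn K)⟩
  | or φ ψ hφ hψ =>
    obtain ⟨m, hm⟩ := hφ
    obtain ⟨n, hn⟩ := hψ
    exact ⟨m * n, fun K => lowerGenerated_teams_or (hm K) (hn K)⟩
  | dia φ hφ => exact hφ.imp fun _ hm K => lowerGenerated_teams_dia (hm K)
  | box φ hφ => exact hφ.imp fun _ hm K => lowerGenerated_teams_box (hm K)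
  | idis φ ψ hφ hψ =>
    obtain ⟨m, hm⟩ := hφ
    obtain ⟨n, hn⟩ := hψ
    exact ⟨m + n, fun K => lowerGenerated_teams_idis (hm K) (hn K)⟩

theorem dim_eq_sInf_lowerGenerated (φ : MLI Φ) :
    Dim φ = sInf {m | ∀ K : Kripke Φ, LowerGenerated m (teams K φ)} := by
  obtain ⟨_, hgen⟩ := exists_forall_lowerGenerated_teams φ
  refine congrArg sInf (Set.ext fun m => forall_congr' fun K => ?_)
  rw [← encard_le_coe_iff_finite_ncard_le, mset_eq_setOf_maximal]
  exact ⟨(hgen K).of_encard_setOf_maximal_le, LowerGenerated.encard_setOf_maximal_le⟩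

theorem dim_le {φ : MLI Φ} (h : ∀ K : Kripke Φ, LowerGenerated m (teams K φ)) : Dim φ ≤ m :=
  dim_eq_sInf_lowerGenerated φ ▸ Nat.sInf_le h

theorem lowerGenerated_dim (φ : MLI Φ) (K : Kripke Φ) : LowerGenerated (Dim φ) (teams K φ) := by
  rw [dim_eq_sInf_lowerGenerated]
  exact Nat.sInf_mem (exists_forall_lowerGenerated_teams φ) K

theorem dim_pos (φ : MLI Φ) : 0 < Dim φ :=
  let K : Kripke Φ := ⟨Empty, fun _ _ => False, fun _ => ∅⟩
  (lowerGenerated_dim φ K).pos ⟨∅, sat_empty K φ⟩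

end MLI

/-- Estimates for the upper dimension of `ML(⊻)`-formulas. -/
theorem dim_estimates {Φ : Type} :
    (∀ p : Φ, MLI.Dim (MLI.atom p) = 1 ∧ MLI.Dim (MLI.natom p) = 1) ∧
    (∀ φ ψ : MLI Φ,
      MLI.Dim (MLI.and φ ψ) ≤ MLI.Dim φ * MLI.Dim ψ ∧
      MLI.Dim (MLI.or φ ψ) ≤ MLI.Dim φ * MLI.Dim ψ ∧
      MLI.Dim (MLI.idis φ ψ) ≤ MLI.Dim φ + MLI.Dim ψ) ∧
    (∀ φ : MLI Φ, MLI.Dim (MLI.dia φ) ≤ MLI.Dim φ ∧ MLI.Dim (MLI.box φ) ≤ MLI.Dim φ) := by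
  refine ⟨fun p => ⟨?_, ?_⟩, fun φ ψ => ⟨?_, ?_, ?_⟩, fun φ => ⟨?_, ?_⟩⟩
  · exact (MLI.dim_le fun _ => MLI.lowerGenerated_teams_atom p).antisymm (MLI.dim_pos _)
  · exact (MLI.dim_le fun _ => MLI.lowerGenerated_teams_natom p).antisymm (MLI.dim_pos _)
  · exact MLI.dim_le fun K =>
      MLI.lowerGenerated_teams_and (MLI.lowerGenerated_dim φ K) (MLI.lowerGenerated_dim ψ K)
  · exact MLI.dim_le fun K =>
      MLI.lowerGenerated_teams_or (MLI.lowerGenerated_dim φ K) (MLI.lowerGenerated_dim ψ K)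
  · exact MLI.dim_le fun K =>
      MLI.lowerGenerated_teams_idis (MLI.lowerGenerated_dim φ K) (MLI.lowerGenerated_dim ψ K)
  · exact MLI.dim_le fun K => MLI.lowerGenerated_teams_dia (MLI.lowerGenerated_dim φ K)
  · exact MLI.dim_le fun K => MLI.lowerGenerated_teams_box (MLI.lowerGenerated_dim φ K)

end MDLTeam
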